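/- Let K be a quantum symmetric kernel of order r with θ := Tr(ρ^{⊗r} K), first Hoeffding projection K_1 := Tr_{2,...,r}[ (1 ⊗ ρ^{⊗(r−1)}) K ] − θ·1 ∈ M(ℂ^d), and ξ_1 := Tr(ρ K_1²). Assume K_1 ≠ 0. Then for every p ∈ ℕ, lim_{n→∞} Tr( ρ^{⊗n} ( √n (U_n − θ·1) )^p ) equals the p-th moment of the centered Gaussian law with variance r² ξ_1, i.e. (r² ξ_1)^{p/2} (p−1)!! for p even and 0 for p odd. -/

import Mathlib

/-!
Expectations in the product state `ρ^{⊗n}` are the functionals `Tr(ρ^{⊗n} ·)`. The Hoeffding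
decomposition writes `K - θ` as `A + B`, where `A = ∑ⱼ K₁^{(j)}` is linear and `B` vanishes under
every functional `Tr((N₁ ⊗ ⋯ ⊗ N_r) ·)` in which at most one `Nⱼ` differs from `ρ`.

Expanding a product of U-statistics gives expectations of words in ampliated kernels. Such an
expectation vanishes unless each letter `A` shares at least one slot, and each letter `B` at least
two, with the other letters. Since a shared slot is covered at least twice, a word of length `p`
containing some `B` then meets at most `p r - (p + 1) / 2` slots. There are
`O(n ^ (p r - (p + 1) / 2))` such words, too few to survive the normalization `n ^ (p / 2 - p r)`,
and only the powers of `√n U_n(A)` contribute to the limit.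

Finally `√n U_n(A) = (r / √n) ∑ᵢ K₁^{(i)}` is a normalized sum of commuting copies of `K₁` that are
independent in the product state. The exponential generating function of the moments of the sum is
therefore the `n`-th power of `∑ Tr(ρ K₁^q) X^q / q! = 1 + ξ₁ X² / 2 + ⋯`, and its rescaled
coefficients converge to the Gaussian ones.
-/

open scoped BigOperators
open Matrix Filter Topology MeasureTheory ProbabilityTheory
open scoped ComplexOrder

/-- The tensor product of a family of `d × d` matrices, as a matrix indexed by
multi-indices `Fin n → Fin d`. -/
noncomputable def tensorFam {d n : ℕ} (M : Fin n → Matrix (Fin d) (Fin d) ℂ) :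
    Matrix (Fin n → Fin d) (Fin n → Fin d) ℂ :=
  Matrix.of fun x y => ∏ i, M i (x i) (y i)

/-- The ampliation `K^{(β)}` of a kernel `K` of order `r` to `(ℂ^d)^{⊗n}`. -/
noncomputable def ampl {d r n : ℕ} (K : Matrix (Fin r → Fin d) (Fin r → Fin d) ℂ)
    (β : Finset (Fin n)) (hβ : β.card = r) :
    Matrix (Fin n → Fin d) (Fin n → Fin d) ℂ :=
  Matrix.of fun x y =>
    K (fun i => x ((β.orderIsoOfFin hβ i : Fin n)))
        (fun i => y ((β.orderIsoOfFin hβ i : Fin n))) *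
      ∏ j ∈ βᶜ, if x j = y j then (1 : ℂ) else 0

/-- The quantum U-statistic `U_n = C(n,r)⁻¹ Σ_β K^{(β)}`. -/
noncomputable def qUstat {d r : ℕ} (K : Matrix (Fin r → Fin d) (Fin r → Fin d) ℂ)
    (n : ℕ) : Matrix (Fin n → Fin d) (Fin n → Fin d) ℂ :=
  (n.choose r : ℂ)⁻¹ •
    ∑ β ∈ (Finset.powersetCard r (Finset.univ : Finset (Fin n))).attach,
      ampl K β.1 (Finset.mem_powersetCard.mp β.2).2

/-- The partial trace over the tensor slots `2, ..., r` of an operator on `(ℂ^d)^{⊗r}`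
(keeping the first slot). -/
noncomputable def ptrRest {d r : ℕ} (hr : 0 < r)
    (N : Matrix (Fin r → Fin d) (Fin r → Fin d) ℂ) : Matrix (Fin d) (Fin d) ℂ :=
  Matrix.of fun a b =>
    ∑ g : Fin r → Fin d,
      if g ⟨0, hr⟩ = a then N g (Function.update g ⟨0, hr⟩ b) else 0

/-- The first Hoeffding projection
`K₁ := Tr_{2,...,r}[(1 ⊗ ρ^{⊗(r−1)}) K] − θ·1` of a kernel of order `r`. -/
noncomputable def firstHoef {d r : ℕ} (hr : 0 < r) (ρ : Matrix (Fin d) (Fin d) ℂ)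
    (K : Matrix (Fin r → Fin d) (Fin r → Fin d) ℂ) : Matrix (Fin d) (Fin d) ℂ :=
  ptrRest hr ((tensorFam fun j : Fin r => if j = ⟨0, hr⟩ then 1 else ρ) * K) -
    ((tensorFam fun _ : Fin r => ρ) * K).trace • (1 : Matrix (Fin d) (Fin d) ℂ)

/-- Operators on the tensor power `(ℂ^d)^{⊗n}`, as matrices indexed by multi-indices. -/
abbrev TensorOp (d n : ℕ) := Matrix (Fin n → Fin d) (Fin n → Fin d) ℂ

section ElementaryTensors

variable {d n : ℕ}

lemma tensorFam_one : tensorFam (1 : Fin n → Matrix (Fin d) (Fin d) ℂ) = 1 := by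
  ext x y
  simp [tensorFam, Matrix.one_apply, Finset.prod_ite_zero, funext_iff]

lemma tensorFam_mul (M N : Fin n → Matrix (Fin d) (Fin d) ℂ) :
    tensorFam (M * N) = tensorFam M * tensorFam N := by
  ext x y
  simp only [tensorFam, Matrix.mul_apply, Matrix.of_apply, Pi.mul_apply,
    ← Finset.prod_mul_distrib]
  rw [Finset.prod_univ_sum, Fintype.piFinset_univ]

/-- The elementary tensor `m ↦ m₁ ⊗ ⋯ ⊗ m_n`, as a monoid homomorphism. -/
noncomputable def tensorHom (d n : ℕ) : (Fin n → Matrix (Fin d) (Fin d) ℂ) →* TensorOp d n where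
  toFun := tensorFam
  map_one' := tensorFam_one
  map_mul' := tensorFam_mul

@[simp]
lemma tensorHom_apply (m : Fin n → Matrix (Fin d) (Fin d) ℂ) :
    tensorHom d n m = tensorFam m := rfl

lemma trace_tensorFam (m : Fin n → Matrix (Fin d) (Fin d) ℂ) :
    (tensorFam m).trace = ∏ i, (m i).trace := by
  simp only [tensorFam, Matrix.trace, Matrix.diag_apply, Matrix.of_apply]
  rw [Finset.prod_univ_sum, Fintype.piFinset_univ]

lemma tensorFam_single (u v : Fin n → Fin d) :
    tensorFam (fun j => Matrix.single (u j) (v j) 1) = Matrix.single u v 1 := by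
  ext x y
  simp [tensorFam, Matrix.single_apply, Finset.prod_ite_zero, funext_iff, forall_and]

lemma span_range_tensorFam :
    Submodule.span ℂ (Set.range (tensorFam : _ → TensorOp d n)) = ⊤ := by
  refine eq_top_iff.2 fun M _ => ?_
  rw [Matrix.matrix_eq_sum_single M]
  refine Submodule.sum_mem _ fun u _ => Submodule.sum_mem _ fun v _ => ?_
  rw [← mul_one (M u v), ← smul_eq_mul, ← Matrix.smul_single, ← tensorFam_single]
  exact Submodule.smul_mem _ _ (Submodule.subset_span (Set.mem_range_self _))

/-- The functional `A ↦ Tr((N₁ ⊗ ⋯ ⊗ N_n) A)`; for `N` constantly equal to a density matrix it is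
the expectation in the product state. -/
noncomputable def tensorTrace (N : Fin n → Matrix (Fin d) (Fin d) ℂ) : TensorOp d n →ₗ[ℂ] ℂ :=
  Matrix.traceLinearMap _ ℂ ℂ ∘ₗ LinearMap.mulLeft ℂ (tensorFam N)

lemma tensorTrace_apply (N : Fin n → Matrix (Fin d) (Fin d) ℂ) (A : TensorOp d n) :
    tensorTrace N A = (tensorFam N * A).trace := rfl

lemma tensorTrace_tensorFam (N m : Fin n → Matrix (Fin d) (Fin d) ℂ) :
    tensorTrace N (tensorFam m) = ∏ i, (N i * m i).trace := by
  rw [tensorTrace_apply, ← tensorFam_mul, trace_tensorFam]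
  rfl

lemma tensorTrace_one (N : Fin n → Matrix (Fin d) (Fin d) ℂ) :
    tensorTrace N 1 = ∏ i, (N i).trace := by
  rw [tensorTrace_apply, mul_one, trace_tensorFam]

lemma tensorTrace_tensorFam_mul (N m : Fin n → Matrix (Fin d) (Fin d) ℂ) (A : TensorOp d n) :
    tensorTrace N (tensorFam m * A) = tensorTrace (N * m) A := by
  rw [tensorTrace_apply, tensorTrace_apply, ← mul_assoc, ← tensorFam_mul]

end ElementaryTensors

section SlotAmpliation

variable {d r n : ℕ}

/-- The ampliation of an operator of order `r` along an injection `f` of the slots, as a linear map: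
it acts as `M` on the slots `f 0, …, f (r - 1)` and as the identity elsewhere. -/
noncomputable def slotAmplLinear (f : Fin r ↪ Fin n) : TensorOp d r →ₗ[ℂ] TensorOp d n where
  toFun M := Matrix.of fun x y =>
    M (x ∘ f) (y ∘ f) * ∏ i ∈ (Finset.univ.map f)ᶜ, if x i = y i then (1 : ℂ) else 0
  map_add' M N := by ext x y; simp [add_mul]
  map_smul' c M := by ext x y; simp [mul_assoc]

lemma prod_univ_eq_prod_comp_mul {R : Type*} [CommMonoid R] (f : Fin r ↪ Fin n)
    (g : Fin n → R) : ∏ i, g i = (∏ j, g (f j)) * ∏ i ∈ (Finset.univ.map f)ᶜ, g i := by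
  rw [← Finset.prod_mul_prod_compl (Finset.univ.map f) g, Finset.prod_map]

lemma slotAmplLinear_tensorFam (f : Fin r ↪ Fin n) (m : Fin r → Matrix (Fin d) (Fin d) ℂ) :
    slotAmplLinear f (tensorFam m) = tensorFam (Function.extend f m 1) := by
  ext x y
  simp only [slotAmplLinear, tensorFam, LinearMap.coe_mk, AddHom.coe_mk, Matrix.of_apply]
  rw [prod_univ_eq_prod_comp_mul f]
  congr 1
  · simp [f.injective.extend_apply]
  · refine Finset.prod_congr rfl fun i hi => ?_
    rw [Function.extend_apply' _ _ _ (by simpa using hi), Pi.one_apply, Matrix.one_apply]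

lemma slotAmplLinear_one (f : Fin r ↪ Fin n) : slotAmplLinear f (1 : TensorOp d r) = 1 := by
  rw [← tensorFam_one, slotAmplLinear_tensorFam, Function.extend_one, tensorFam_one]

lemma slotAmplLinear_mul (f : Fin r ↪ Fin n) (A B : TensorOp d r) :
    slotAmplLinear f (A * B) = slotAmplLinear f A * slotAmplLinear f B := by
  suffices h : (LinearMap.mul ℂ _).compr₂ (slotAmplLinear f) =
      (LinearMap.mul ℂ _).compl₁₂ (slotAmplLinear (d := d) f) (slotAmplLinear f) from
    LinearMap.congr_fun₂ h A B
  refine LinearMap.ext_on_range span_range_tensorFam fun a =>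
    LinearMap.ext_on_range span_range_tensorFam fun b => ?_
  simp only [LinearMap.compr₂_apply, LinearMap.compl₁₂_apply, LinearMap.mul_apply',
    ← tensorFam_mul, slotAmplLinear_tensorFam, ← Function.extend_mul, one_mul]

/-- The ampliation along an injection of the slots, as an algebra homomorphism. -/
noncomputable def slotAmpl (f : Fin r ↪ Fin n) : TensorOp d r →ₐ[ℂ] TensorOp d n :=
  AlgHom.ofLinearMap (slotAmplLinear f) (slotAmplLinear_one f) (slotAmplLinear_mul f)

lemma slotAmpl_tensorFam (f : Fin r ↪ Fin n) (m : Fin r → Matrix (Fin d) (Fin d) ℂ) :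
    slotAmpl f (tensorFam m) = tensorFam (Function.extend f m 1) :=
  slotAmplLinear_tensorFam f m

lemma slotAmpl_trans {s : ℕ} (f : Fin r ↪ Fin s) (g : Fin s ↪ Fin n) (M : TensorOp d r) :
    slotAmpl (f.trans g) M = slotAmpl g (slotAmpl f M) := by
  suffices h : (slotAmpl (d := d) (f.trans g)).toLinearMap =
      (slotAmpl g).toLinearMap ∘ₗ (slotAmpl f).toLinearMap from LinearMap.congr_fun h M
  refine LinearMap.ext_on_range span_range_tensorFam fun m => ?_
  simp only [AlgHom.toLinearMap_apply, LinearMap.comp_apply, slotAmpl_tensorFam]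
  exact congrArg tensorFam (f.injective.extend_comp g.injective m 1)

lemma ampl_eq_slotAmpl (M : TensorOp d r) (β : Finset (Fin n)) (hβ : β.card = r) :
    ampl M β hβ = slotAmpl (β.orderEmbOfFin hβ).toEmbedding M := by
  ext x y
  have hβ' : Finset.univ.map (β.orderEmbOfFin hβ).toEmbedding = β :=
    β.map_orderEmbOfFin_univ hβ
  simp only [ampl, slotAmpl, slotAmplLinear, AlgHom.ofLinearMap_apply, LinearMap.coe_mk,
    AddHom.coe_mk, Matrix.of_apply, hβ']
  rfl

lemma tensorTrace_slotAmpl (N : Fin n → Matrix (Fin d) (Fin d) ℂ) (f : Fin r ↪ Fin n)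
    (M : TensorOp d r) :
    tensorTrace N (slotAmpl f M) =
      tensorTrace (N ∘ f) M * ∏ i ∈ (Finset.univ.map f)ᶜ, (N i).trace := by
  suffices h : tensorTrace N ∘ₗ (slotAmpl f).toLinearMap =
      (∏ i ∈ (Finset.univ.map f)ᶜ, (N i).trace) • tensorTrace (N ∘ f) by
    simpa [mul_comm] using LinearMap.congr_fun h M
  refine LinearMap.ext_on_range span_range_tensorFam fun m => ?_
  rw [LinearMap.comp_apply, AlgHom.toLinearMap_apply, slotAmpl_tensorFam, tensorTrace_tensorFam,
    LinearMap.smul_apply, tensorTrace_tensorFam, smul_eq_mul, mul_comm,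
    prod_univ_eq_prod_comp_mul f]
  congr 1
  · simp [f.injective.extend_apply]
  · refine Finset.prod_congr rfl fun i hi => ?_
    rw [Function.extend_apply' _ _ _ (by simpa using hi), Pi.one_apply, mul_one]

lemma qUstat_eq_smul_sum_slotAmpl (M : TensorOp d r) (n : ℕ) :
    qUstat M n =
      (n.choose r : ℂ)⁻¹ • ∑ f : Fin r ↪o Fin n, slotAmpl f.toEmbedding M := by
  rw [qUstat, ← Finset.univ_eq_attach]
  simp only [ampl_eq_slotAmpl]
  congr 1
  exact Fintype.sum_equiv
    ((Equiv.subtypeEquivRight fun β => by simp [Set.powersetCard.mem_iff]).trans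
      Set.powersetCard.ofFinEmbEquiv.symm) _ _ fun β => rfl

lemma card_orderEmbedding_fin (r n : ℕ) : Fintype.card (Fin r ↪o Fin n) = n.choose r := by
  rw [← Nat.card_eq_fintype_card, Nat.card_congr Set.powersetCard.ofFinEmbEquiv,
    Set.powersetCard.card, Nat.card_fin]

lemma qUstat_add (A B : TensorOp d r) (n : ℕ) : qUstat (A + B) n = qUstat A n + qUstat B n := by
  simp only [qUstat_eq_smul_sum_slotAmpl, map_add, Finset.sum_add_distrib, smul_add]

lemma qUstat_sub (A B : TensorOp d r) (n : ℕ) : qUstat (A - B) n = qUstat A n - qUstat B n := by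
  simp only [qUstat_eq_smul_sum_slotAmpl, map_sub, Finset.sum_sub_distrib, smul_sub]

lemma qUstat_smul_one (c : ℂ) {n : ℕ} (hn : r ≤ n) :
    qUstat (c • (1 : TensorOp d r)) n = c • 1 := by
  have hchoose : (n.choose r : ℂ) ≠ 0 := by exact_mod_cast (Nat.choose_pos hn).ne'
  rw [qUstat_eq_smul_sum_slotAmpl]
  simp only [map_smul, map_one, Finset.sum_const, Finset.card_univ, card_orderEmbedding_fin]
  rw [← Nat.cast_smul_eq_nsmul ℂ, inv_smul_smul₀ hchoose]

end SlotAmpliation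

section Degeneracy

variable {d r n : ℕ} {ρ : Matrix (Fin d) (Fin d) ℂ}

/-- Degeneracy of order `q`: the functionals `Tr((N₁ ⊗ ⋯ ⊗ N_r) ·)` in which fewer than `q` of the
`N_j` differ from `ρ` vanish on `M`. -/
def IsDegenerate (ρ : Matrix (Fin d) (Fin d) ℂ) (q : ℕ) (M : TensorOp d r) : Prop :=
  ∀ J : Finset (Fin r), J.card < q → ∀ N : Fin r → Matrix (Fin d) (Fin d) ℂ,
    (∀ j ∉ J, N j = ρ) → tensorTrace N M = 0

/-- The algebra of the operators acting as the identity on the slots in `P`. -/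
noncomputable def trivialOn (d : ℕ) (P : Set (Fin n)) : Subalgebra ℂ (TensorOp d n) :=
  Algebra.adjoin ℂ ((Submonoid.pi P fun _ => ⊥).map (tensorHom d n))

lemma toSubmodule_trivialOn (P : Set (Fin n)) :
    (trivialOn d P).toSubmodule = Submodule.span ℂ (tensorFam '' {m | ∀ i ∈ P, m i = 1}) := by
  rw [trivialOn, Algebra.adjoin_eq_span, Submonoid.closure_eq]
  rfl

lemma slotAmpl_mem_trivialOn {f : Fin r ↪ Fin n} {P : Set (Fin n)} (hf : ∀ j, f j ∉ P)
    (M : TensorOp d r) : slotAmpl f M ∈ trivialOn d P := by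
  suffices h : ⊤ ≤ (trivialOn d P).toSubmodule.comap (slotAmpl f).toLinearMap from
    h (Submodule.mem_top (x := M))
  rw [← span_range_tensorFam, Submodule.span_le, toSubmodule_trivialOn]
  rintro _ ⟨m, rfl⟩
  refine Submodule.subset_span ⟨Function.extend f m 1, fun i hi => ?_,
    (slotAmpl_tensorFam f m).symm⟩
  exact Function.extend_apply' _ _ _ (by rintro ⟨j, rfl⟩; exact hf j hi)

lemma tensorTrace_mul_mul_tensorFam (N v w : Fin n → Matrix (Fin d) (Fin d) ℂ)
    (A : TensorOp d n) :
    tensorTrace N (tensorFam v * A * tensorFam w) = tensorTrace (w * N * v) A := by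
  rw [mul_assoc, tensorTrace_tensorFam_mul, tensorTrace_apply, tensorTrace_apply, ← mul_assoc,
    Matrix.trace_mul_comm, ← mul_assoc, ← tensorFam_mul, mul_assoc w]

lemma IsDegenerate.tensorTrace_mul_slotAmpl_mul {q : ℕ} {M : TensorOp d r}
    (hM : IsDegenerate ρ q M) (f : Fin r ↪ Fin n) {J : Finset (Fin r)} (hJ : J.card < q)
    {V W : TensorOp d n} (hV : V ∈ trivialOn d (f '' {j | j ∉ J}))
    (hW : W ∈ trivialOn d (f '' {j | j ∉ J})) :
    tensorTrace (fun _ => ρ) (V * slotAmpl f M * W) = 0 := by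
  rw [← Subalgebra.mem_toSubmodule, toSubmodule_trivialOn] at hV hW
  induction hV, hW using Submodule.span_induction₂ with
  | mem_mem V W hV hW =>
    obtain ⟨v, hv, rfl⟩ := hV
    obtain ⟨w, hw, rfl⟩ := hW
    rw [tensorTrace_mul_mul_tensorFam, tensorTrace_slotAmpl, hM J hJ, zero_mul]
    intro j hj
    simp [hv _ ⟨j, hj, rfl⟩, hw _ ⟨j, hj, rfl⟩]
  | zero_left => simp
  | zero_right => simp
  | add_left V₁ V₂ W _ _ _ h₁ h₂ => rw [add_mul, add_mul, map_add, h₁, h₂, add_zero]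
  | add_right V W₁ W₂ _ _ _ h₁ h₂ => rw [mul_add, map_add, h₁, h₂, add_zero]
  | smul_left c V W _ _ h => rw [smul_mul_assoc, smul_mul_assoc, map_smul, h, smul_zero]
  | smul_right c V W _ _ h => rw [mul_smul_comm, map_smul, h, smul_zero]

lemma exists_prod_ofFn_eq_mul_mul {A : Type*} [Monoid A] (S : Submonoid A) {p : ℕ}
    (x : Fin p → A) (a : Fin p) (h : ∀ b ≠ a, x b ∈ S) :
    ∃ V ∈ S, ∃ W ∈ S, (List.ofFn x).prod = V * x a * W := by
  induction p with
  | zero => exact a.elim0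
  | succ p ih =>
    rw [List.ofFn_succ, List.prod_cons]
    cases a using Fin.cases with
    | zero =>
      refine ⟨1, S.one_mem, _, S.list_prod_mem ?_, by rw [one_mul]⟩
      simpa [List.mem_ofFn] using fun b => h b.succ (Fin.succ_ne_zero b)
    | succ a =>
      obtain ⟨V, hV, W, hW, hVW⟩ :=
        ih (fun b => x b.succ) a fun b hb => h _ ((Fin.succ_injective _).ne hb)
      exact ⟨x 0 * V, S.mul_mem (h 0 (Fin.succ_ne_zero a).symm) hV, W, hW, by
        simp only [hVW, mul_assoc]⟩

/-- The expectation, in the product state of `ρ`, of the word `M₀^{(f₀)} M₁^{(f₁)} ⋯`. -/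
noncomputable def wordTrace (ρ : Matrix (Fin d) (Fin d) ℂ) {p : ℕ} (M : Fin p → TensorOp d r)
    (f : Fin p → Fin r ↪ Fin n) : ℂ :=
  tensorTrace (fun _ => ρ) (List.ofFn fun a => slotAmpl (f a) (M a)).prod

lemma wordTrace_eq_zero {p : ℕ} {M : Fin p → TensorOp d r} {f : Fin p → Fin r ↪ Fin n} {q : ℕ}
    {a : Fin p} (hM : IsDegenerate ρ q (M a)) {J : Finset (Fin r)} (hJ : J.card < q)
    (hf : ∀ j ∉ J, ∀ b ≠ a, ∀ l, f b l ≠ f a j) : wordTrace ρ M f = 0 := by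
  obtain ⟨V, hV, W, hW, hVW⟩ := exists_prod_ofFn_eq_mul_mul
    (trivialOn d (f a '' {j | j ∉ J})).toSubmonoid (fun b => slotAmpl (f b) (M b)) a
    fun b hb => slotAmpl_mem_trivialOn (by rintro l ⟨j, hj, hjl⟩; exact hf j hj b hb l hjl.symm) _
  rw [wordTrace, hVW]
  exact hM.tensorTrace_mul_slotAmpl_mul (f a) hJ hV hW

lemma wordTrace_trans (hρ : ρ.trace = 1) {p s : ℕ} (M : Fin p → TensorOp d r)
    (f : Fin p → Fin r ↪ Fin s) (g : Fin s ↪ Fin n) :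
    wordTrace ρ M (fun a => (f a).trans g) = wordTrace ρ M f := by
  have hword : (List.ofFn fun a => slotAmpl ((f a).trans g) (M a)).prod =
      slotAmpl g (List.ofFn fun a => slotAmpl (f a) (M a)).prod := by
    simp only [slotAmpl_trans, map_list_prod, List.map_ofFn, Function.comp_def]
  rw [wordTrace, hword, tensorTrace_slotAmpl]
  simp [wordTrace, hρ, Function.comp_def]

/-- Relabelling the at most `p * r` slots that a word meets puts it in `(ℂ^d)^{⊗ p r}`, where
there are only finitely many words. -/
lemma exists_norm_wordTrace_le (hρ : ρ.trace = 1) {p : ℕ} (M : Fin p → TensorOp d r) :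
    ∃ C ≥ 0, ∀ n ≥ p * r, ∀ f : Fin p → Fin r ↪ Fin n, ‖wordTrace ρ M f‖ ≤ C := by
  refine ⟨∑ f' : Fin p → Fin r ↪ Fin (p * r), ‖wordTrace ρ M f'‖,
    Finset.sum_nonneg fun _ _ => norm_nonneg _, fun n hn f => ?_⟩
  obtain ⟨S, hfS, hS⟩ : ∃ S : Finset (Fin n),
      (Finset.univ.image fun x : Fin p × Fin r => f x.1 x.2) ⊆ S ∧ S.card = p * r :=
    Finset.exists_superset_card_eq (Finset.card_image_le.trans (by simp)) (by simpa)
  have hmem : ∀ a j, f a j ∈ S := fun a j =>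
    hfS (Finset.mem_image_of_mem (fun x : Fin p × Fin r => f x.1 x.2) (Finset.mem_univ (a, j)))
  let f' (a : Fin p) : Fin r ↪ Fin (p * r) :=
    ((f a).codRestrict (S : Set (Fin n)) (hmem a)).trans
      (S.orderIsoOfFin hS).symm.toEquiv.toEmbedding
  have hf : f = fun a => (f' a).trans (S.orderEmbOfFin hS).toEmbedding := by
    funext a
    ext j
    exact congrArg (fun i : S => (i.1 : ℕ))
      ((S.orderIsoOfFin hS).apply_symm_apply ⟨f a j, hmem a j⟩).symm
  rw [hf, wordTrace_trans hρ]
  exact Finset.single_le_sum (f := fun f' => ‖wordTrace ρ M f'‖) (fun _ _ => norm_nonneg _)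
    (Finset.mem_univ _)

end Degeneracy

section Counting

variable {ι α : Type*} [Fintype ι] [DecidableEq ι] [DecidableEq α]

lemma card_filter_card_image_le [Fintype α] [Nonempty α] (m : ℕ) :
    (Finset.univ.filter fun g : ι → α => (Finset.univ.image g).card ≤ m).card ≤
      m ^ Fintype.card ι * Fintype.card α ^ m := by
  have hfactor : (Finset.univ.filter fun g : ι → α => (Finset.univ.image g).card ≤ m) ⊆
      (Finset.univ : Finset ((ι → Fin m) × (Fin m → α))).image fun c => c.2 ∘ c.1 := by
    intro g hg
    obtain ⟨ψ⟩ := Function.Embedding.nonempty_of_card_le (α := Finset.univ.image g) (β := Fin m)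
      (by simpa only [Fintype.card_coe, Fintype.card_fin] using (Finset.mem_filter.1 hg).2)
    refine Finset.mem_image.2 ⟨(fun i => ψ ⟨g i, by simp⟩,
      Function.extend ψ Subtype.val fun _ => Classical.arbitrary α), Finset.mem_univ _, ?_⟩
    funext i
    simp [ψ.injective.extend_apply]
  exact (Finset.card_le_card hfactor).trans (Finset.card_image_le.trans (by simp))

lemma card_filter_two_mul_card_image_add_le [Fintype α] [Nonempty α] (t : ℕ) :
    ((Finset.univ.filter fun g : ι → α =>
        2 * (Finset.univ.image g).card + t ≤ 2 * Fintype.card ι).card : ℝ) *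
        √(Fintype.card α) ^ t ≤
      Fintype.card ι ^ Fintype.card ι * Fintype.card α ^ Fintype.card ι := by
  rcases lt_or_ge (2 * Fintype.card ι) t with ht | ht
  · rw [Finset.filter_false_of_mem fun g _ => by omega, Finset.card_empty, Nat.cast_zero, zero_mul]
    positivity
  · let m := (2 * Fintype.card ι - t) / 2
    have hcount : (Finset.univ.filter fun g : ι → α =>
        2 * (Finset.univ.image g).card + t ≤ 2 * Fintype.card ι).card ≤
        Fintype.card ι ^ Fintype.card ι * Fintype.card α ^ m := by
      refine (Finset.card_le_card ?_).trans ((card_filter_card_image_le m).trans ?_)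
      · exact Finset.monotone_filter_right _ fun g _ hg => by omega
      · gcongr
        omega
    have hsqrt (k : ℕ) : (Fintype.card α : ℝ) ^ k = √(Fintype.card α) ^ (2 * k) := by
      rw [pow_mul, Real.sq_sqrt (Nat.cast_nonneg _)]
    calc _ ≤ (Fintype.card ι ^ Fintype.card ι * Fintype.card α ^ m : ℝ) *
          √(Fintype.card α) ^ t := by
          gcongr
          exact_mod_cast hcount
      _ = Fintype.card ι ^ Fintype.card ι * √(Fintype.card α) ^ (2 * m + t) := by
          rw [hsqrt, pow_add, mul_assoc]
      _ ≤ Fintype.card ι ^ Fintype.card ι * √(Fintype.card α) ^ (2 * Fintype.card ι) := by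
          gcongr ?_ * ?_
          exact pow_le_pow_right₀ (Real.one_le_sqrt.2 (by exact_mod_cast Fintype.card_pos))
            (by omega)
      _ = _ := by rw [hsqrt]

/-- Every value taken more than once uses up at least two points. -/
lemma two_mul_card_image_add_card_filter_le (g : ι → α) :
    2 * (Finset.univ.image g).card +
        (Finset.univ.filter fun x => ∃ y ≠ x, g y = g x).card ≤ 2 * Fintype.card ι := by
  let S := Finset.univ.filter fun x => ∃ y ≠ x, g y = g x
  have hS : S.card = ∑ i ∈ Finset.univ.image g, (S.filter fun x => g x = i).card :=
    Finset.card_eq_sum_card_fiberwise fun x _ => by simp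
  have hι : Fintype.card ι =
      ∑ i ∈ Finset.univ.image g, (Finset.univ.filter fun x => g x = i).card :=
    Finset.card_eq_sum_card_image g Finset.univ
  change 2 * (Finset.univ.image g).card + S.card ≤ _
  rw [hS, hι, Finset.card_eq_sum_ones, Finset.mul_sum, Finset.mul_sum, ← Finset.sum_add_distrib]
  refine Finset.sum_le_sum fun i hi => ?_
  have hle : (S.filter fun x => g x = i).card ≤ (Finset.univ.filter fun x => g x = i).card :=
    Finset.card_le_card (Finset.filter_subset_filter _ (Finset.subset_univ _))
  have hpos : 0 < (Finset.univ.filter fun x => g x = i).card := by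
    obtain ⟨x, -, hx⟩ := Finset.mem_image.1 hi
    exact Finset.card_pos.2 ⟨x, by simpa using hx⟩
  rcases Nat.lt_or_ge 1 (Finset.univ.filter fun x => g x = i).card with hmany | hone
  · omega
  · have hempty : S.filter (fun x => g x = i) = ∅ := by
      refine Finset.filter_eq_empty_iff.2 fun x hx hxi => ?_
      obtain ⟨y, hyx, hy⟩ := (Finset.mem_filter.1 hx).2
      exact hyx (Finset.card_le_one.1 hone y (by simp [hy, hxi]) x (by simp [hxi]))
    rw [hempty, Finset.card_empty]
    omega

end Counting

section WordExpansion

variable {A : Type*} [Semiring A] {p : ℕ}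

lemma prod_ofFn_sum {ι : Type*} [Fintype ι] (x : Fin p → ι → A) :
    (List.ofFn fun a => ∑ i, x a i).prod = ∑ s : Fin p → ι, (List.ofFn fun a => x a (s a)).prod :=
  (MultilinearMap.mkPiAlgebraFin ℕ p A).map_sum x

lemma prod_ofFn_smul {R : Type*} [CommSemiring R] [Algebra R A] (c : Fin p → R) (x : Fin p → A) :
    (List.ofFn fun a => c a • x a).prod = (∏ a, c a) • (List.ofFn x).prod :=
  (MultilinearMap.mkPiAlgebraFin R p A).map_smul_univ c x

end WordExpansion

section Decay

variable {d r p : ℕ} {ρ : Matrix (Fin d) (Fin d) ℂ}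

lemma two_mul_card_image_add_sum_le {n : ℕ} {q : Fin p → ℕ} {M : Fin p → TensorOp d r}
    (hM : ∀ a, IsDegenerate ρ (q a) (M a)) {f : Fin p → Fin r ↪ Fin n}
    (hf : wordTrace ρ M f ≠ 0) :
    2 * (Finset.univ.image fun x : Fin p × Fin r => f x.1 x.2).card + ∑ a, q a ≤
      2 * Fintype.card (Fin p × Fin r) := by
  let g (x : Fin p × Fin r) : Fin n := f x.1 x.2
  let J (a : Fin p) : Finset (Fin r) := Finset.univ.filter fun j => ∃ y ≠ (a, j), g y = g (a, j)
  have hq (a : Fin p) : q a ≤ (J a).card := by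
    by_contra! hJ
    refine hf (wordTrace_eq_zero (hM a) hJ fun j hj b hb l hl => hj ?_)
    exact Finset.mem_filter.2 ⟨Finset.mem_univ _, (b, l), fun h => hb (congrArg Prod.fst h), hl⟩
  calc _ ≤ 2 * (Finset.univ.image g).card + ∑ a, (J a).card := by gcongr; exact hq _
    _ = 2 * (Finset.univ.image g).card +
        (Finset.univ.filter fun x => ∃ y ≠ x, g y = g x).card := by
      simp only [J, Finset.card_filter, Fintype.sum_prod_type]
    _ ≤ _ := two_mul_card_image_add_card_filter_le g

lemma card_filter_wordTrace_ne_zero_le {n : ℕ} [NeZero n] {q : Fin p → ℕ}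
    {M : Fin p → TensorOp d r} (hM : ∀ a, IsDegenerate ρ (q a) (M a)) :
    ((Finset.univ.filter fun f : Fin p → Fin r ↪o Fin n =>
        wordTrace ρ M (fun a => (f a).toEmbedding) ≠ 0).card : ℝ) * √n ^ ∑ a, q a ≤
      (p * r : ℕ) ^ (p * r) * n ^ (p * r) := by
  let slotOf (f : Fin p → Fin r ↪o Fin n) (x : Fin p × Fin r) : Fin n := f x.1 x.2
  have hslotOf : Function.Injective slotOf := fun f g hfg => by
    ext a j
    exact congrArg Fin.val (congrFun hfg (a, j))
  refine le_trans ?_ ((card_filter_two_mul_card_image_add_le (ι := Fin p × Fin r) (α := Fin n)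
    (∑ a, q a)).trans_eq (by simp))
  rw [Fintype.card_fin n]
  gcongr
  refine Finset.card_le_card_of_injOn slotOf (fun f hf => ?_) hslotOf.injOn
  exact Finset.mem_filter.2
    ⟨Finset.mem_univ _, two_mul_card_image_add_sum_le hM (Finset.mem_filter.1 hf).2⟩

lemma isBigO_sum_wordTrace (hρ : ρ.trace = 1) {q : Fin p → ℕ} {M : Fin p → TensorOp d r}
    (hM : ∀ a, IsDegenerate ρ (q a) (M a)) :
    (fun n : ℕ => ∑ f : Fin p → Fin r ↪o Fin n, wordTrace ρ M fun a => (f a).toEmbedding)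
      =O[atTop] fun n : ℕ => (n : ℝ) ^ (p * r) / √n ^ ∑ a, q a := by
  obtain ⟨C, hC0, hC⟩ := exists_norm_wordTrace_le hρ M
  refine Asymptotics.IsBigO.of_bound (C * (p * r : ℕ) ^ (p * r)) ?_
  filter_upwards [eventually_ge_atTop (p * r), eventually_gt_atTop 0] with n hn hn0
  have : NeZero n := ⟨hn0.ne'⟩
  rw [← Finset.sum_filter_ne_zero, Real.norm_of_nonneg (by positivity), mul_assoc, ← mul_div_assoc]
  calc _ ≤ _ := norm_sum_le_of_le _ fun f _ => hC n hn _
    _ ≤ _ := by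
      rw [Finset.sum_const, nsmul_eq_mul, mul_comm]
      gcongr
      rw [le_div_iff₀ (by positivity)]
      exact card_filter_wordTrace_ne_zero_le hM

lemma tensorTrace_prod_qUstat (M : Fin p → TensorOp d r) (n : ℕ) :
    tensorTrace (fun _ => ρ) (List.ofFn fun a => qUstat (M a) n).prod =
      (n.choose r : ℂ)⁻¹ ^ p *
        ∑ f : Fin p → Fin r ↪o Fin n, wordTrace ρ M fun a => (f a).toEmbedding := by
  simp only [qUstat_eq_smul_sum_slotAmpl, prod_ofFn_smul, prod_ofFn_sum, map_smul, map_sum,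
    Finset.prod_const, Finset.card_univ, Fintype.card_fin, smul_eq_mul, wordTrace]

lemma isBigO_tensorTrace_prod_qUstat (hρ : ρ.trace = 1) {q : Fin p → ℕ}
    {M : Fin p → TensorOp d r} (hM : ∀ a, IsDegenerate ρ (q a) (M a)) :
    (fun n : ℕ => tensorTrace (fun _ : Fin n => ρ) (List.ofFn fun a => qUstat (M a) n).prod)
      =O[atTop] fun n : ℕ => (√n ^ ∑ a, q a)⁻¹ := by
  simp only [tensorTrace_prod_qUstat]
  have hchoose : (fun n : ℕ => (n.choose r : ℂ)⁻¹ ^ p) =O[atTop]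
      fun n : ℕ => ((n : ℝ) ^ (p * r))⁻¹ := by
    simp only [mul_comm p, pow_mul, ← inv_pow _ p]
    refine (Asymptotics.IsBigO.of_norm_left ?_).pow p
    simpa using (isTheta_choose r).inv.isBigO
  refine (hchoose.mul (isBigO_sum_wordTrace hρ hM)).congr' EventuallyEq.rfl ?_
  filter_upwards [eventually_gt_atTop 0] with n hn
  field_simp

lemma tendsto_tensorTrace_prod_qUstat (hρ : ρ.trace = 1) {q : Fin p → ℕ} (hq : p < ∑ a, q a)
    {M : Fin p → TensorOp d r} (hM : ∀ a, IsDegenerate ρ (q a) (M a)) :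
    Tendsto (fun n : ℕ => tensorTrace (fun _ : Fin n => ρ)
      (List.ofFn fun a => √n • qUstat (M a) n).prod) atTop (𝓝 0) := by
  have hprod (n : ℕ) : tensorTrace (fun _ : Fin n => ρ)
      (List.ofFn fun a => √n • qUstat (M a) n).prod =
      √n ^ p • tensorTrace (fun _ => ρ) (List.ofFn fun a => qUstat (M a) n).prod := by
    rw [prod_ofFn_smul, LinearMap.map_smul_of_tower, Fin.prod_const]
  simp only [hprod]
  refine ((Asymptotics.isBigO_refl _ _).smul
    (isBigO_tensorTrace_prod_qUstat hρ hM)).trans_tendsto ?_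
  have hsqrt : Tendsto (fun n : ℕ => √(n : ℝ)) atTop atTop :=
    Real.tendsto_sqrt_atTop.comp tendsto_natCast_atTop_atTop
  simpa only [smul_eq_mul, ← div_eq_mul_inv, Function.comp_def] using
    (tendsto_pow_div_pow_atTop_zero hq).comp hsqrt

end Decay

section GaussianMoments

open PowerSeries

/-- The `p`-th moment of the centered Gaussian law with variance `v`, extended to complex `v`; for
`p = 0` the truncated subtraction gives `0‼ = 1`. -/
noncomputable def gaussianMoment (v : ℂ) (p : ℕ) : ℂ :=
  if Even p then v ^ (p / 2) * ((p - 1).doubleFactorial : ℂ) else 0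

lemma pow_mul_gaussianMoment (c v : ℂ) (p : ℕ) :
    c ^ p * gaussianMoment v p = gaussianMoment (c ^ 2 * v) p := by
  unfold gaussianMoment
  split_ifs with hp
  · rw [mul_pow, ← pow_mul, Nat.mul_div_cancel' hp.two_dvd, mul_assoc]
  · rw [mul_zero]

lemma factorial_two_mul (h : ℕ) :
    (2 * h).factorial = (2 * h - 1).doubleFactorial * (2 ^ h * h.factorial) := by
  rcases h with _ | h
  · simp
  · rw [← Nat.doubleFactorial_two_mul, mul_add_one, Nat.factorial_eq_mul_doubleFactorial, mul_comm]
    rfl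

lemma tendsto_choose_div_sqrt_pow {j p : ℕ} (hj : 2 * j ≤ p) :
    Tendsto (fun n : ℕ => (n.choose j : ℝ) / √n ^ p) atTop
      (𝓝 (if 2 * j = p then (j.factorial : ℝ)⁻¹ else 0)) := by
  obtain ⟨t, rfl⟩ := Nat.exists_eq_add_of_le hj
  have hlim : Tendsto (fun n : ℕ => (j.factorial : ℝ)⁻¹ * (√n)⁻¹ ^ t) atTop
      (𝓝 ((j.factorial : ℝ)⁻¹ * 0 ^ t)) :=
    ((Real.tendsto_sqrt_atTop.comp tendsto_natCast_atTop_atTop).inv_tendsto_atTop.pow t).const_mul _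
  have hval : (j.factorial : ℝ)⁻¹ * 0 ^ t =
      if 2 * j = 2 * j + t then (j.factorial : ℝ)⁻¹ else 0 := by
    rcases t with _ | t <;> simp
  have hequiv := (isEquivalent_choose j).div
    (Asymptotics.IsEquivalent.refl (u := fun n : ℕ => √(n : ℝ) ^ (2 * j + t)))
  rw [← hval]
  refine hequiv.symm.tendsto_nhds (hlim.congr' ?_)
  filter_upwards [eventually_gt_atTop 0] with n hn
  have hpow : (n : ℝ) ^ j = √n ^ (2 * j) := by rw [pow_mul, Real.sq_sqrt (Nat.cast_nonneg n)]
  rw [Pi.div_apply, hpow, pow_add, inv_pow]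
  field_simp

lemma coeff_X_sq_mul_add_one_pow {R : Type*} [CommSemiring R] (H : R⟦X⟧) (n p : ℕ) :
    coeff p ((X ^ 2 * H + 1) ^ n) =
      ∑ j ∈ Finset.range (p / 2 + 1), n.choose j * coeff (p - 2 * j) (H ^ j) := by
  have hterm (j : ℕ) : coeff p ((X ^ 2 * H) ^ j * 1 ^ (n - j) * (n.choose j : R⟦X⟧)) =
      if 2 * j ≤ p then n.choose j * coeff (p - 2 * j) (H ^ j) else 0 := by
    rw [one_pow, mul_one, ← nsmul_eq_mul', map_nsmul, mul_pow, ← pow_mul, coeff_X_pow_mul',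
      nsmul_eq_mul, mul_ite, mul_zero]
  rw [add_pow, map_sum]
  simp only [hterm]
  refine Finset.sum_congr_of_eq_on_inter (fun j _ hj => ?_) (fun j _ hjn => ?_) fun j _ hj => ?_
  · rw [if_neg]
    simp only [Finset.mem_range] at hj
    omega
  · simp only [Finset.mem_range, not_lt] at hjn
    rw [Nat.choose_eq_zero_of_lt (by omega), Nat.cast_zero, zero_mul]
  · rw [if_pos]
    simp only [Finset.mem_range] at hj
    omega

lemma sum_factorial_mul_coeff_pow_eq_gaussianMoment (H : ℂ⟦X⟧) (p : ℕ) :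
    ∑ j ∈ Finset.range (p / 2 + 1), ((if 2 * j = p then (j.factorial : ℝ)⁻¹ else 0 : ℝ) : ℂ) *
        (p.factorial * coeff (p - 2 * j) (H ^ j)) =
      gaussianMoment (2 * coeff 0 H) p := by
  unfold gaussianMoment
  split_ifs with hp
  · obtain ⟨h, rfl⟩ := even_iff_two_dvd.1 hp
    rw [Finset.sum_eq_single_of_mem h (Finset.mem_range.2 (by omega)) fun j _ hj => by
      rw [if_neg (by omega), Complex.ofReal_zero, zero_mul], if_pos rfl, Nat.sub_self,
      factorial_two_mul, Nat.mul_div_cancel_left _ two_pos,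
      coeff_zero_eq_constantCoeff_apply, coeff_zero_eq_constantCoeff_apply, map_pow, mul_pow]
    have hfac : (h.factorial : ℂ) ≠ 0 := by exact_mod_cast h.factorial_ne_zero
    push_cast
    field_simp
  · refine Finset.sum_eq_zero fun j _ => ?_
    rw [if_neg (by rintro rfl; exact hp (even_two_mul j)), Complex.ofReal_zero, zero_mul]

/-- The central limit theorem at the level of exponential generating functions of moments. -/
lemma tendsto_factorial_mul_coeff_pow {F : ℂ⟦X⟧} (h₀ : coeff 0 F = 1) (h₁ : coeff 1 F = 0)
    (p : ℕ) :
    Tendsto (fun n : ℕ => (((√n)⁻¹ ^ p : ℝ) : ℂ) * (p.factorial * coeff p (F ^ n))) atTop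
      (𝓝 (gaussianMoment (2 * coeff 2 F) p)) := by
  obtain ⟨H, hH⟩ : X ^ 2 ∣ F - 1 := X_pow_dvd_iff.2 fun q hq => by
    interval_cases q
    · rw [map_sub, h₀, coeff_zero_one, sub_self]
    · rw [map_sub, h₁, coeff_one, if_neg one_ne_zero, sub_zero]
  obtain rfl : F = X ^ 2 * H + 1 := sub_eq_iff_eq_add.1 hH
  have h₂ : coeff 2 (X ^ 2 * H + 1) = coeff 0 H := by
    simp [coeff_X_pow_mul', coeff_one]
  rw [h₂, ← sum_factorial_mul_coeff_pow_eq_gaussianMoment]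
  refine (tendsto_finsetSum _ fun j hj => (((Complex.continuous_ofReal.tendsto _).comp
    (tendsto_choose_div_sqrt_pow ?_)).mul_const _)).congr fun n => ?_
  · have := Finset.mem_range.1 hj
    omega
  · rw [coeff_X_sq_mul_add_one_pow, Finset.mul_sum, Finset.mul_sum]
    refine Finset.sum_congr rfl fun j _ => ?_
    simp only [Function.comp_apply, div_eq_mul_inv]
    push_cast
    ring

end GaussianMoments

section IndependentCopies

variable {d n : ℕ}

/-- The operator acting as `k` on the slot `i` and as the identity elsewhere. -/
noncomputable def site (i : Fin n) : Matrix (Fin d) (Fin d) ℂ →* TensorOp d n :=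
  (tensorHom d n).comp (MonoidHom.mulSingle (fun _ => Matrix (Fin d) (Fin d) ℂ) i)

lemma site_apply (i : Fin n) (k : Matrix (Fin d) (Fin d) ℂ) :
    site i k = tensorFam (Pi.mulSingle i k) := rfl

lemma commute_site {i j : Fin n} (hij : i ≠ j) (k l : Matrix (Fin d) (Fin d) ℂ) :
    Commute (site i k) (site j l) :=
  (Pi.mulSingle_commute (f := fun _ => Matrix (Fin d) (Fin d) ℂ) hij k l).map (tensorHom d n)

/-- The exponential generating function of the moments `Tr(N k^q)`. -/
noncomputable def momentSeries (N k : Matrix (Fin d) (Fin d) ℂ) : PowerSeries ℂ :=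
  PowerSeries.mk fun q => (N * k ^ q).trace / q.factorial

lemma noncommProd_site_pow (k : Fin n → Matrix (Fin d) (Fin d) ℂ) (e : Fin n → ℕ)
    (h : Set.Pairwise (Finset.univ : Finset (Fin n))
      (Function.onFun Commute fun i => site i (k i) ^ e i)) :
    Finset.univ.noncommProd (fun i => site i (k i) ^ e i) h =
      tensorFam fun i => k i ^ e i := by
  have hmap := Finset.map_noncommProd Finset.univ (fun i => Pi.mulSingle i (k i ^ e i))
    (fun i _ j _ hij => Pi.mulSingle_commute hij _ _) (tensorHom d n)
  rw [Finset.noncommProd_mulSingle fun i => k i ^ e i] at hmap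
  rw [← tensorHom_apply, hmap]
  exact Finset.noncommProd_congr rfl (fun i _ => (map_pow (site i) (k i) (e i)).symm) _

lemma coeff_prod_eq_sum_piAntidiag {R ι : Type*} [CommSemiring R] [Fintype ι] [DecidableEq ι]
    (F : ι → PowerSeries R) (p : ℕ) :
    PowerSeries.coeff p (∏ i, F i) =
      ∑ e ∈ Finset.univ.piAntidiag p, ∏ i, PowerSeries.coeff (e i) (F i) := by
  rw [PowerSeries.coeff_prod]
  exact Finset.sum_nbij' (⇑) Finsupp.equivFunOnFinite.symm (by simp) (by simp)
    (fun _ _ => Finsupp.ext fun _ => rfl) (fun _ _ => rfl) fun _ _ => rfl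

lemma tensorTrace_sum_site_pow (N k : Fin n → Matrix (Fin d) (Fin d) ℂ) (p : ℕ) :
    tensorTrace N ((∑ i, site i (k i)) ^ p) =
      p.factorial * PowerSeries.coeff p (∏ i, momentSeries (N i) (k i)) := by
  rw [Finset.sum_pow_eq_sum_piAntidiag_of_commute _ _ fun i _ j _ hij => commute_site hij _ _,
    map_sum, coeff_prod_eq_sum_piAntidiag, Finset.mul_sum]
  refine Finset.sum_congr rfl fun e he => ?_
  have hfac : (∏ i, ((e i).factorial : ℂ)) * Nat.multinomial Finset.univ e = p.factorial := by
    rw [← (Finset.mem_piAntidiag.1 he).1]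
    exact_mod_cast Nat.multinomial_spec Finset.univ e
  have hfac0 : ∏ i, ((e i).factorial : ℂ) ≠ 0 :=
    Finset.prod_ne_zero_iff.2 fun i _ => by exact_mod_cast (e i).factorial_ne_zero
  rw [noncommProd_site_pow, ← nsmul_eq_mul, map_nsmul, tensorTrace_tensorFam, nsmul_eq_mul, ← hfac]
  simp only [momentSeries, PowerSeries.coeff_mk, Finset.prod_div_distrib]
  field_simp

lemma tendsto_tensorTrace_sum_site_pow {ρ k : Matrix (Fin d) (Fin d) ℂ} (hρ : ρ.trace = 1)
    (hk : (ρ * k).trace = 0) (p : ℕ) :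
    Tendsto (fun n : ℕ => (((√n)⁻¹ ^ p : ℝ) : ℂ) *
      tensorTrace (fun _ => ρ) ((∑ i : Fin n, site i k) ^ p)) atTop
      (𝓝 (gaussianMoment (ρ * (k * k)).trace p)) := by
  have hF₂ : 2 * PowerSeries.coeff 2 (momentSeries ρ k) = (ρ * (k * k)).trace := by
    rw [momentSeries, PowerSeries.coeff_mk, Nat.factorial_two, Nat.cast_two,
      mul_div_cancel₀ _ two_ne_zero, pow_two]
  rw [← hF₂]
  refine (tendsto_factorial_mul_coeff_pow (by simp [momentSeries, hρ]) (by simp [momentSeries, hk])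
    p).congr fun n => ?_
  rw [tensorTrace_sum_site_pow, Fin.prod_const]

end IndependentCopies

section HoeffdingDecomposition

variable {d r : ℕ} {ρ : Matrix (Fin d) (Fin d) ℂ} {K : TensorOp d r}

lemma tensorTrace_comp_perm
    (hsym : ∀ (τ : Equiv.Perm (Fin r)) (x y : Fin r → Fin d), K (x ∘ τ) (y ∘ τ) = K x y)
    (N : Fin r → Matrix (Fin d) (Fin d) ℂ) (τ : Equiv.Perm (Fin r)) :
    tensorTrace (N ∘ τ) K = tensorTrace N K := by
  have hK : slotAmpl τ.toEmbedding K = K := by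
    ext x y
    simp [slotAmpl, slotAmplLinear, hsym]
  simpa [hK] using (tensorTrace_slotAmpl N τ.toEmbedding K).symm

lemma sum_site_apply_mul (i : Fin r) (c : Matrix (Fin d) (Fin d) ℂ) (y : Fin r → Fin d)
    (F : (Fin r → Fin d) → ℂ) :
    ∑ x, site i c x y * F x = ∑ a, c a (y i) * F (Function.update y i a) := by
  refine (Finset.sum_of_injOn (Function.update y i) (Function.update_injective y i).injOn
    (by simp) (fun x _ hx => ?_) fun a _ => ?_).symm
  · obtain ⟨j, hji, hj⟩ : ∃ j ≠ i, x j ≠ y j := by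
      by_contra! h
      exact hx ⟨x i, by simp, Function.update_eq_iff.2 ⟨rfl, fun j hj => (h j hj).symm⟩⟩
    rw [site_apply, tensorFam, Matrix.of_apply, Finset.prod_eq_zero (Finset.mem_univ j), zero_mul]
    rw [Pi.mulSingle_eq_of_ne hji, Matrix.one_apply_ne hj]
  · rw [site_apply, tensorFam, Matrix.of_apply, Finset.prod_eq_single_of_mem i (Finset.mem_univ i)]
    · rw [Pi.mulSingle_eq_same, Function.update_self]
    · intro j _ hj
      rw [Pi.mulSingle_eq_of_ne hj, Function.update_of_ne hj, Matrix.one_apply_eq]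

lemma trace_mul_ptrRest (hr : 0 < r) (c : Matrix (Fin d) (Fin d) ℂ) (M : TensorOp d r) :
    (c * ptrRest hr M).trace = (site ⟨0, hr⟩ c * M).trace := by
  have hsite : (site ⟨0, hr⟩ c * M).trace = ∑ y, ∑ a, c a (y ⟨0, hr⟩) *
      M y (Function.update y ⟨0, hr⟩ a) := by
    simp only [← sum_site_apply_mul]
    rw [Matrix.trace_mul_comm]
    simp only [Matrix.trace, Matrix.diag_apply, Matrix.mul_apply, mul_comm]
  rw [hsite, Finset.sum_comm]
  simp only [Matrix.trace, Matrix.diag_apply, Matrix.mul_apply, ptrRest, Matrix.of_apply,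
    Finset.mul_sum, mul_ite, mul_zero]
  refine Finset.sum_congr rfl fun a _ => Finset.sum_comm.trans ?_
  simp

lemma trace_mul_firstHoef (hr : 0 < r)
    (hsym : ∀ (τ : Equiv.Perm (Fin r)) (x y : Fin r → Fin d), K (x ∘ τ) (y ∘ τ) = K x y)
    (j : Fin r) (c : Matrix (Fin d) (Fin d) ℂ) :
    (c * firstHoef hr ρ K).trace = tensorTrace (Function.update (fun _ => ρ) j c) K -
      tensorTrace (fun _ => ρ) K * c.trace := by
  have hslots : (Pi.mulSingle ⟨0, hr⟩ c * fun j : Fin r => if j = ⟨0, hr⟩ then 1 else ρ) =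
      Function.update (fun _ => ρ) j c ∘ Equiv.swap ⟨0, hr⟩ j := by
    rw [Function.update_comp_equiv, Equiv.symm_swap, Equiv.swap_apply_right]
    funext i
    by_cases hi : i = ⟨0, hr⟩ <;> simp [hi]
  rw [firstHoef, mul_sub, Matrix.trace_sub, trace_mul_ptrRest, ← mul_assoc, site_apply,
    ← tensorFam_mul, hslots, ← tensorTrace_apply, ← tensorTrace_apply, tensorTrace_comp_perm hsym]
  simp

lemma trace_mul_firstHoef_self (hr : 0 < r) (hρ : ρ.trace = 1)
    (hsym : ∀ (τ : Equiv.Perm (Fin r)) (x y : Fin r → Fin d), K (x ∘ τ) (y ∘ τ) = K x y) :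
    (ρ * firstHoef hr ρ K).trace = 0 := by
  rw [trace_mul_firstHoef hr hsym ⟨0, hr⟩, Function.update_eq_self_iff.2 rfl, hρ, mul_one, sub_self]

lemma tensorTrace_sum_site_eq_zero {k : Matrix (Fin d) (Fin d) ℂ} (hk : (ρ * k).trace = 0) :
    tensorTrace (fun _ => ρ) (∑ j : Fin r, site j k) = 0 := by
  rw [map_sum]
  refine Finset.sum_eq_zero fun j _ => ?_
  rw [site_apply, tensorTrace_tensorFam, Finset.prod_eq_zero (Finset.mem_univ j)]
  rwa [Pi.mulSingle_eq_same]

lemma tensorTrace_update_sum_site (hρ : ρ.trace = 1) {k : Matrix (Fin d) (Fin d) ℂ}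
    (hk : (ρ * k).trace = 0) (j : Fin r) (c : Matrix (Fin d) (Fin d) ℂ) :
    tensorTrace (Function.update (fun _ => ρ) j c) (∑ l, site l k) = (c * k).trace := by
  simp only [map_sum, site_apply, tensorTrace_tensorFam]
  rw [Finset.sum_eq_single_of_mem j (Finset.mem_univ j) fun l _ hl =>
      Finset.prod_eq_zero (Finset.mem_univ l) (by simpa [hl]),
    Finset.prod_eq_single_of_mem j (Finset.mem_univ j) fun i _ hi => by simp [hi, hρ],
    Function.update_self, Pi.mulSingle_eq_same]

lemma isDegenerate_one_of_tensorTrace_eq_zero {M : TensorOp d r}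
    (hM : tensorTrace (fun _ => ρ) M = 0) : IsDegenerate ρ 1 M := by
  intro J hJ N hN
  obtain rfl : J = ∅ := by simpa using hJ
  obtain rfl : N = fun _ => ρ := funext fun j => hN j (Finset.notMem_empty j)
  exact hM

lemma isDegenerate_two_of_tensorTrace_update_eq_zero [NeZero r] {M : TensorOp d r}
    (hM : ∀ j c, tensorTrace (Function.update (fun _ => ρ) j c) M = 0) : IsDegenerate ρ 2 M := by
  intro J hJ N hN
  obtain ⟨j, hj⟩ : ∃ j, J ⊆ {j} :=
    Finset.card_le_one_iff_subset_singleton.1 (Nat.lt_succ_iff.1 hJ)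
  have hNj : N = Function.update (fun _ => ρ) j (N j) :=
    Function.eq_update_iff.2 ⟨rfl, fun i hi => hN i fun h => hi (Finset.mem_singleton.1 (hj h))⟩
  rw [hNj, hM]

lemma isDegenerate_sub_sub_sum_site_firstHoef (hr : 0 < r) (hρ : ρ.trace = 1)
    (hsym : ∀ (τ : Equiv.Perm (Fin r)) (x y : Fin r → Fin d), K (x ∘ τ) (y ∘ τ) = K x y) :
    IsDegenerate ρ 2
      (K - tensorTrace (fun _ => ρ) K • 1 - ∑ j : Fin r, site j (firstHoef hr ρ K)) := by
  have : NeZero r := ⟨hr.ne'⟩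
  refine isDegenerate_two_of_tensorTrace_update_eq_zero fun j c => ?_
  have hone : tensorTrace (Function.update (fun _ => ρ) j c) 1 = c.trace := by
    rw [tensorTrace_one, Finset.prod_eq_single_of_mem j (Finset.mem_univ j) fun i _ hi => by
      rw [Function.update_of_ne hi, hρ], Function.update_self]
  rw [map_sub, map_sub, map_smul, hone,
    tensorTrace_update_sum_site hρ (trace_mul_firstHoef_self hr hρ hsym),
    trace_mul_firstHoef hr hsym j, smul_eq_mul, sub_self]

end HoeffdingDecomposition

section LinearPart

lemma sum_powersetCard_sum {α A : Type*} [AddCommMonoid A] {m : ℕ} (hm : 0 < m)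
    (s : Finset α) (f : α → A) :
    ∑ t ∈ s.powersetCard m, ∑ i ∈ t, f i = (s.card - 1).choose (m - 1) • ∑ i ∈ s, f i := by
  classical
  rw [Finset.sum_comm' (t' := s) (s' := fun i => (s.powersetCard m).filter ({i} ⊆ ·)),
    Finset.smul_sum]
  · refine Finset.sum_congr rfl fun i hi => ?_
    rw [Finset.sum_const, Finset.card_filter_powersetCard_subset _ _ _ (by simpa) (by simpa),
      Finset.card_singleton]
  · simp only [Finset.mem_powersetCard, Finset.mem_filter, Finset.singleton_subset_iff]
    exact fun t i => ⟨fun h => ⟨h, h.1.1 h.2⟩, fun h => h.1⟩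

variable {d r n : ℕ} {ρ : Matrix (Fin d) (Fin d) ℂ}

lemma slotAmpl_site (f : Fin r ↪ Fin n) (j : Fin r) (k : Matrix (Fin d) (Fin d) ℂ) :
    slotAmpl f (site j k) = site (f j) k := by
  rw [site_apply, site_apply, slotAmpl_tensorFam]
  congr 1
  funext i
  by_cases hi : ∃ l, f l = i
  · obtain ⟨l, rfl⟩ := hi
    simp [f.injective.extend_apply, Pi.mulSingle_apply]
  · rw [Function.extend_apply' _ _ _ hi, Pi.one_apply,
      Pi.mulSingle_eq_of_ne fun h => hi ⟨j, h.symm⟩]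

lemma ampl_sum_site (k : Matrix (Fin d) (Fin d) ℂ) (β : Finset (Fin n)) (hβ : β.card = r) :
    ampl (∑ j, site j k) β hβ = ∑ i ∈ β, site i k := by
  rw [ampl_eq_slotAmpl, map_sum]
  conv_rhs => rw [← β.map_orderEmbOfFin_univ hβ, Finset.sum_map]
  exact Finset.sum_congr rfl fun j _ => slotAmpl_site _ _ _

lemma qUstat_sum_site (hr : 0 < r) (hn : r ≤ n) (k : Matrix (Fin d) (Fin d) ℂ) :
    qUstat (∑ j : Fin r, site j k) n = ((r : ℂ) / n) • ∑ i, site i k := by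
  have hchoose : (n - 1).choose (r - 1) * (n : ℂ) = n.choose r * r := by
    obtain ⟨n, rfl⟩ := Nat.exists_eq_add_of_le' (hr.trans_le hn)
    obtain ⟨r, rfl⟩ := Nat.exists_eq_add_of_le' hr
    exact_mod_cast (mul_comm _ _).trans (Nat.add_one_mul_choose_eq n r)
  have hchoose0 : (n.choose r : ℂ) ≠ 0 := by exact_mod_cast (Nat.choose_pos hn).ne'
  have hn0 : (n : ℂ) ≠ 0 := by exact_mod_cast (hr.trans_le hn).ne'
  simp only [qUstat, ampl_sum_site]
  rw [Finset.sum_attach _ fun β => ∑ i ∈ β, site i k, sum_powersetCard_sum hr,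
    ← Nat.cast_smul_eq_nsmul ℂ, smul_smul, Finset.card_univ, Fintype.card_fin]
  congr 1
  field_simp
  exact hchoose

lemma tendsto_tensorTrace_qUstat_sum_site_pow (hr : 0 < r) (hρ : ρ.trace = 1)
    {k : Matrix (Fin d) (Fin d) ℂ} (hk : (ρ * k).trace = 0) (p : ℕ) :
    Tendsto (fun n : ℕ => tensorTrace (fun _ => ρ) ((√n • qUstat (∑ j : Fin r, site j k) n) ^ p))
      atTop (𝓝 (gaussianMoment (r ^ 2 * (ρ * (k * k)).trace) p)) := by
  rw [← pow_mul_gaussianMoment]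
  refine ((tendsto_tensorTrace_sum_site_pow hρ hk p).const_mul _).congr' ?_
  filter_upwards [eventually_ge_atTop r] with n hn
  have hsqrt : ((√n : ℝ) : ℂ) * (r / n) = r * ((√n)⁻¹ : ℝ) := by
    rw [← Complex.ofReal_natCast n, mul_div_left_comm, ← Complex.ofReal_div, Real.sqrt_div_self]
  rw [qUstat_sum_site hr hn, ← Complex.coe_smul, smul_smul, hsqrt, smul_pow, map_smul,
    smul_eq_mul, mul_pow, Complex.ofReal_pow, mul_assoc]

end LinearPart

section MomentLimit

lemma add_pow_eq_sum_prod_ofFn {A : Type*} [Semiring A] (x y : A) (p : ℕ) :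
    (x + y) ^ p = ∑ s : Fin p → Fin 2, (List.ofFn fun a => ![x, y] (s a)).prod := by
  rw [← prod_ofFn_sum fun _ => ![x, y]]
  simp

variable {d r : ℕ} {ρ : Matrix (Fin d) (Fin d) ℂ}

lemma tendsto_tensorTrace_qUstat_add_pow_sub (hρ : ρ.trace = 1) {A B : TensorOp d r}
    (hA : IsDegenerate ρ 1 A) (hB : IsDegenerate ρ 2 B) (p : ℕ) :
    Tendsto (fun n : ℕ => tensorTrace (fun _ => ρ) ((√n • qUstat (A + B) n) ^ p) -
      tensorTrace (fun _ => ρ) ((√n • qUstat A n) ^ p)) atTop (𝓝 0) := by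
  have hAB (i : Fin 2) : IsDegenerate ρ (i + 1) (![A, B] i) := by
    fin_cases i
    exacts [hA, hB]
  have hword (s : Fin p → Fin 2) (hs : s ∈ ({0}ᶜ : Finset (Fin p → Fin 2))) :
      Tendsto (fun n : ℕ => tensorTrace (fun _ : Fin n => ρ)
        (List.ofFn fun a => √n • qUstat (![A, B] (s a)) n).prod) atTop (𝓝 0) := by
    refine tendsto_tensorTrace_prod_qUstat hρ ?_ fun a => hAB (s a)
    obtain ⟨a, ha⟩ := Function.ne_iff.1 (by simpa using hs : s ≠ 0)
    have hpos : 0 < ∑ a, (s a : ℕ) :=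
      Finset.sum_pos' (fun _ _ => Nat.zero_le _) ⟨a, Finset.mem_univ a, Fin.pos_iff_ne_zero.2 ha⟩
    simpa [Finset.sum_add_distrib] using hpos
  rw [← Finset.sum_const_zero (s := ({0}ᶜ : Finset (Fin p → Fin 2)))]
  refine (tendsto_finsetSum _ hword).congr fun n => ?_
  have hkernel (i : Fin 2) :
      ![√n • qUstat A n, √n • qUstat B n] i = √n • qUstat (![A, B] i) n := by
    fin_cases i <;> rfl
  rw [qUstat_add, smul_add, add_pow_eq_sum_prod_ofFn, map_sum, Fintype.sum_eq_add_sum_compl 0]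
  simp [hkernel]

theorem stmt15_general {d r : ℕ} (hr : 0 < r) (ρ : Matrix (Fin d) (Fin d) ℂ)
    (hρtr : ρ.trace = 1) (K : Matrix (Fin r → Fin d) (Fin r → Fin d) ℂ)
    (hsym : ∀ (τ : Equiv.Perm (Fin r)) (x y : Fin r → Fin d), K (x ∘ τ) (y ∘ τ) = K x y)
    (θ : ℂ) (hθ : θ = ((tensorFam fun _ : Fin r => ρ) * K).trace)
    (ξ₁ : ℂ) (hξ : ξ₁ = (ρ * (firstHoef hr ρ K * firstHoef hr ρ K)).trace) (p : ℕ) :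
    Tendsto
      (fun n => ((tensorFam fun _ : Fin n => ρ) *
        ((Real.sqrt n) •
          (qUstat K n - θ • (1 : Matrix (Fin n → Fin d) (Fin n → Fin d) ℂ))) ^ p).trace)
      atTop
      (𝓝 (if Even p then ((r : ℂ) ^ 2 * ξ₁) ^ (p / 2) * ((p - 1).doubleFactorial : ℂ)
        else 0)) := by
  have hK₁ := trace_mul_firstHoef_self hr hρtr hsym
  let A : TensorOp d r := ∑ j, site j (firstHoef hr ρ K)
  have hA : IsDegenerate ρ 1 A :=
    isDegenerate_one_of_tensorTrace_eq_zero (tensorTrace_sum_site_eq_zero hK₁)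
  have hB : IsDegenerate ρ 2 (K - θ • 1 - A) :=
    hθ ▸ isDegenerate_sub_sub_sum_site_firstHoef hr hρtr hsym
  have hlimit := (tendsto_tensorTrace_qUstat_add_pow_sub hρtr hA hB p).add
    (tendsto_tensorTrace_qUstat_sum_site_pow hr hρtr hK₁ p)
  rw [zero_add, ← hξ] at hlimit
  refine hlimit.congr' ?_
  filter_upwards [eventually_ge_atTop r] with n hn
  rw [sub_add_cancel, add_sub_cancel, qUstat_sub, qUstat_smul_one θ hn, tensorTrace_apply]

end MomentLimit

/-- **Convergence of moments of non-degenerate quantum U-statistics to the Gaussian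
moments.** -/
theorem stmt15 {d r : ℕ} (hr : 0 < r) (ρ : Matrix (Fin d) (Fin d) ℂ)
    (hρ : ρ.PosDef) (hρtr : ρ.trace = 1)
    (K : Matrix (Fin r → Fin d) (Fin r → Fin d) ℂ)
    (hherm : K.IsHermitian)
    (hsym : ∀ (τ : Equiv.Perm (Fin r)) (x y : Fin r → Fin d), K (x ∘ τ) (y ∘ τ) = K x y)
    (θ : ℂ) (hθ : θ = ((tensorFam fun _ : Fin r => ρ) * K).trace)
    (ξ₁ : ℂ) (hξ : ξ₁ = (ρ * (firstHoef hr ρ K * firstHoef hr ρ K)).trace)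
    (hnondeg : firstHoef hr ρ K ≠ 0) :
    ∀ p : ℕ,
      Tendsto
        (fun n => ((tensorFam fun _ : Fin n => ρ) *
          ((Real.sqrt n) •
            (qUstat K n - θ • (1 : Matrix (Fin n → Fin d) (Fin n → Fin d) ℂ))) ^ p).trace)
        atTop
        (𝓝 (if Even p then ((r : ℂ) ^ 2 * ξ₁) ^ (p / 2) * ((p - 1).doubleFactorial : ℂ)
          else 0)) :=
  stmt15_general hr ρ hρtr K hsym θ hθ ξ₁ hξ
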